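/- Let q ∈ [1,∞] with dual exponent q* (1/q + 1/q* = 1). For all positive semidefinite matrices A, B ∈ ℝ^{n×n}, ‖A + B‖_{q→q*} ≥ ‖A‖_{q→q*}. That is, the (q→q*) operator norm is a monotone matrix norm. -/

import Mathlib

open scoped BigOperators ENNReal
open Matrix

/-- The `ℓ_q` norm of a real vector, for `q ∈ [1,∞]` given as an extended nonnegative real
(`q = ⊤` is the max/sup norm). -/
noncomputable def vecNorm {ι : Type*} [Fintype ι] (q : ℝ≥0∞) (v : ι → ℝ) : ℝ :=
  if q = ⊤ then ⨆ i, |v i| else (∑ i, |v i| ^ q.toReal) ^ (1 / q.toReal)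

/-- The `q → p` operator norm of a real matrix:
`‖M‖_{q→p} = sup { ‖Mx‖_p : ‖x‖_q ≤ 1 }`. -/
noncomputable def opNorm {ι₁ ι₂ : Type*} [Fintype ι₁] [Fintype ι₂] (q p : ℝ≥0∞)
    (M : Matrix ι₁ ι₂ ℝ) : ℝ :=
  sSup {y : ℝ | ∃ x : ι₂ → ℝ, vecNorm q x ≤ 1 ∧ y = vecNorm p (M.mulVec x)}

/-- The squared Frobenius norm of a real matrix. -/
noncomputable def frobSq {ι₁ ι₂ : Type*} [Fintype ι₁] [Fintype ι₂] (M : Matrix ι₁ ι₂ ℝ) : ℝ :=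
  ∑ i, ∑ j, (M i j) ^ 2

/-!
For `A` symmetric, duality and Hölder's inequality turn `‖A‖_{q→q*}` into the supremum of the
bilinear form `y ⬝ᵥ A *ᵥ x` over two copies of the *same* ball, that of `ℓ_q`. By polarization,
`4 (y ⬝ᵥ A *ᵥ x)` is a difference of values of the quadratic form of `A` at `x + y` and `x - y`.
If `C` dominates that quadratic form in absolute value, then the parallelogram law for `C` bounds
the difference by `2 (x ⬝ᵥ C *ᵥ x + y ⬝ᵥ C *ᵥ y)`, hence by `4 ‖C‖_{q→q*}`. A positive semidefinite
`A` is dominated in this way by `A + B`.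
-/

section VecNorm

variable {ι : Type*} [Fintype ι]

theorem vecNorm_eq_norm_toLp (p : ℝ≥0∞) [hp : Fact (1 ≤ p)] (v : ι → ℝ) :
    vecNorm p v = ‖WithLp.toLp p v‖ := by
  unfold vecNorm
  split_ifs with h
  · subst h
    simp [PiLp.norm_eq_ciSup]
  · simp [PiLp.norm_eq_sum (ENNReal.toReal_pos (zero_lt_one.trans_le hp.out).ne' h)]

theorem vecNorm_nonneg (p : ℝ≥0∞) (v : ι → ℝ) : 0 ≤ vecNorm p v := by
  unfold vecNorm
  split_ifs
  · exact Real.iSup_nonneg fun i => abs_nonneg (v i)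
  · positivity

theorem vecNorm_zero (p : ℝ≥0∞) [Fact (1 ≤ p)] : vecNorm p (0 : ι → ℝ) = 0 := by
  simp [vecNorm_eq_norm_toLp]

theorem vecNorm_one_eq_sum (v : ι → ℝ) : vecNorm 1 v = ∑ i, |v i| := by
  simp [vecNorm]

theorem vecNorm_top_eq_iSup (v : ι → ℝ) : vecNorm ⊤ v = ⨆ i, |v i| := by
  simp [vecNorm]

theorem abs_apply_le_vecNorm (p : ℝ≥0∞) [Fact (1 ≤ p)] (v : ι → ℝ) (i : ι) :
    |v i| ≤ vecNorm p v := by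
  rw [vecNorm_eq_norm_toLp]
  exact PiLp.norm_apply_le (WithLp.toLp p v) i

theorem dotProduct_le_vecNorm_one_mul_vecNorm_top (x y : ι → ℝ) :
    x ⬝ᵥ y ≤ vecNorm 1 x * vecNorm ⊤ y := by
  rw [vecNorm_one_eq_sum, Finset.sum_mul]
  refine Finset.sum_le_sum fun i _ => ?_
  calc x i * y i ≤ |x i| * |y i| := (le_abs_self _).trans_eq (abs_mul _ _)
    _ ≤ |x i| * vecNorm ⊤ y := by gcongr; exact abs_apply_le_vecNorm ⊤ y i

theorem dotProduct_le_vecNorm_mul_vecNorm (p q : ℝ≥0∞) [p.HolderConjugate q] (x y : ι → ℝ) :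
    x ⬝ᵥ y ≤ vecNorm p x * vecNorm q y := by
  by_cases hp : p = ⊤
  · obtain rfl : q = 1 := (ENNReal.HolderConjugate.eq_top_iff_eq_one p q).1 hp
    rw [hp, dotProduct_comm, mul_comm]
    exact dotProduct_le_vecNorm_one_mul_vecNorm_top y x
  by_cases hq : q = ⊤
  · obtain rfl : p = 1 := (ENNReal.HolderConjugate.eq_top_iff_eq_one q p).1 hq
    rw [hq]
    exact dotProduct_le_vecNorm_one_mul_vecNorm_top x y
  · rw [vecNorm, vecNorm, if_neg hp, if_neg hq]
    exact Real.inner_le_Lp_mul_Lq _ x y (ENNReal.HolderConjugate.toReal_of_ne_top hp hq)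

theorem abs_sign_le_one (a : ℝ) : |(SignType.sign a : ℝ)| ≤ 1 := by
  rcases lt_trichotomy a 0 with h | h | h <;> simp [h]

theorem exists_vecNorm_top_le_one_dotProduct_eq (v : ι → ℝ) :
    ∃ y, vecNorm ⊤ y ≤ 1 ∧ y ⬝ᵥ v = vecNorm 1 v := by
  refine ⟨fun i => SignType.sign (v i), ?_, ?_⟩
  · rw [vecNorm_top_eq_iSup]
    exact Real.iSup_le (fun i => abs_sign_le_one (v i)) zero_le_one
  · rw [vecNorm_one_eq_sum]
    exact Finset.sum_congr rfl fun i _ => sign_mul_self (v i)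

theorem exists_vecNorm_one_le_one_dotProduct_eq (v : ι → ℝ) :
    ∃ y, vecNorm 1 y ≤ 1 ∧ y ⬝ᵥ v = vecNorm ⊤ v := by
  classical
  cases isEmpty_or_nonempty ι
  · exact ⟨0, by simp [vecNorm_zero], by simp [vecNorm_top_eq_iSup]⟩
  obtain ⟨i, hi⟩ := exists_eq_ciSup_of_finite (f := fun i => |v i|)
  refine ⟨Pi.single i (SignType.sign (v i) : ℝ), ?_, ?_⟩
  · simpa [vecNorm_eq_norm_toLp] using abs_sign_le_one (v i)
  · rw [vecNorm_top_eq_iSup, single_dotProduct, sign_mul_self, hi]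

theorem exists_vecNorm_le_one_dotProduct_eq_of_ne_top {p q : ℝ≥0∞} [p.HolderConjugate q]
    (hp : p ≠ ⊤) (hq : q ≠ ⊤) (v : ι → ℝ) :
    ∃ y, vecNorm p y ≤ 1 ∧ y ⬝ᵥ v = vecNorm q v := by
  have hpq := ENNReal.HolderConjugate.toReal_of_ne_top hp hq
  obtain ⟨⟨g, hg_norm, hg_dot⟩, -⟩ :=
    NNReal.isGreatest_Lp Finset.univ (fun i => Real.nnabs (v i)) hpq.symm
  refine ⟨fun i => SignType.sign (v i) * g i, ?_, ?_⟩
  · rw [vecNorm, if_neg hp]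
    refine Real.rpow_le_one (by positivity) ?_ hpq.one_div_nonneg
    calc ∑ i, |(SignType.sign (v i) : ℝ) * g i| ^ p.toReal
        ≤ ∑ i, (g i : ℝ) ^ p.toReal := by
          gcongr with i
          rw [abs_mul, NNReal.abs_eq]
          exact mul_le_of_le_one_left (g i).coe_nonneg (abs_sign_le_one (v i))
      _ ≤ 1 := by exact_mod_cast hg_norm
  · rw [vecNorm, if_neg hq]
    calc (fun i => (SignType.sign (v i) : ℝ) * g i) ⬝ᵥ v
        = ∑ i, |v i| * g i :=
          Finset.sum_congr rfl fun i _ => by rw [mul_right_comm, sign_mul_self]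
      _ = (∑ i, |v i| ^ q.toReal) ^ (1 / q.toReal) := by
          simpa using congrArg NNReal.toReal hg_dot

theorem exists_vecNorm_le_one_dotProduct_eq (p q : ℝ≥0∞) [p.HolderConjugate q] (v : ι → ℝ) :
    ∃ y, vecNorm p y ≤ 1 ∧ y ⬝ᵥ v = vecNorm q v := by
  by_cases hp : p = ⊤
  · obtain rfl : q = 1 := (ENNReal.HolderConjugate.eq_top_iff_eq_one p q).1 hp
    rw [hp]
    exact exists_vecNorm_top_le_one_dotProduct_eq v
  by_cases hq : q = ⊤
  · obtain rfl : p = 1 := (ENNReal.HolderConjugate.eq_top_iff_eq_one q p).1 hq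
    rw [hq]
    exact exists_vecNorm_one_le_one_dotProduct_eq v
  · exact exists_vecNorm_le_one_dotProduct_eq_of_ne_top hp hq v

end VecNorm

section OpNorm

variable {ι κ : Type*} [Fintype ι] [Fintype κ]

theorem bddAbove_vecNorm_mulVec (q p : ℝ≥0∞) [Fact (1 ≤ q)] [Fact (1 ≤ p)] (M : Matrix ι κ ℝ) :
    BddAbove {y : ℝ | ∃ x : κ → ℝ, vecNorm q x ≤ 1 ∧ y = vecNorm p (M *ᵥ x)} := by
  classical
  let T := (Matrix.toLpLin q p M).toContinuousLinearMap
  refine ⟨‖T‖, ?_⟩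
  rintro _ ⟨x, hx, rfl⟩
  rw [vecNorm_eq_norm_toLp] at hx ⊢
  exact T.unit_le_opNorm (WithLp.toLp q x) hx

theorem vecNorm_mulVec_le_opNorm {q : ℝ≥0∞} (p : ℝ≥0∞) [Fact (1 ≤ q)] [Fact (1 ≤ p)]
    (M : Matrix ι κ ℝ) {x : κ → ℝ} (hx : vecNorm q x ≤ 1) :
    vecNorm p (M *ᵥ x) ≤ opNorm q p M :=
  le_csSup (bddAbove_vecNorm_mulVec q p M) ⟨x, hx, rfl⟩

theorem opNorm_le {q p : ℝ≥0∞} [Fact (1 ≤ q)] {M : Matrix ι κ ℝ} {c : ℝ}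
    (h : ∀ x, vecNorm q x ≤ 1 → vecNorm p (M *ᵥ x) ≤ c) : opNorm q p M ≤ c := by
  refine csSup_le ⟨_, 0, (vecNorm_zero q).trans_le zero_le_one, rfl⟩ ?_
  rintro _ ⟨x, hx, rfl⟩
  exact h x hx

theorem dotProduct_mulVec_le_opNorm {q r : ℝ≥0∞} (p : ℝ≥0∞) [Fact (1 ≤ q)] [r.HolderConjugate p]
    (M : Matrix ι κ ℝ) {x : κ → ℝ} {y : ι → ℝ} (hx : vecNorm q x ≤ 1) (hy : vecNorm r y ≤ 1) :
    y ⬝ᵥ M *ᵥ x ≤ opNorm q p M := by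
  have : Fact (1 ≤ p) := ⟨ENNReal.HolderConjugate.one_le p r⟩
  calc y ⬝ᵥ M *ᵥ x ≤ vecNorm r y * vecNorm p (M *ᵥ x) :=
        dotProduct_le_vecNorm_mul_vecNorm r p _ _
    _ ≤ vecNorm p (M *ᵥ x) := mul_le_of_le_one_left (vecNorm_nonneg p _) hy
    _ ≤ opNorm q p M := vecNorm_mulVec_le_opNorm p M hx

theorem opNorm_le_of_dotProduct_mulVec_le {q p : ℝ≥0∞} (r : ℝ≥0∞) [Fact (1 ≤ q)]
    [r.HolderConjugate p] {M : Matrix ι κ ℝ} {c : ℝ}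
    (h : ∀ x y, vecNorm q x ≤ 1 → vecNorm r y ≤ 1 → y ⬝ᵥ M *ᵥ x ≤ c) : opNorm q p M ≤ c := by
  refine opNorm_le fun x hx => ?_
  obtain ⟨y, hy, hyx⟩ := exists_vecNorm_le_one_dotProduct_eq r p (M *ᵥ x)
  exact hyx.symm.trans_le (h x y hx hy)

end OpNorm

section QuadraticForm

variable {ι R : Type*} [Fintype ι]

theorem dotProduct_mulVec_comm_of_isSymm [CommSemiring R] {A : Matrix ι ι R} (hA : A.IsSymm)
    (x y : ι → R) : x ⬝ᵥ A *ᵥ y = y ⬝ᵥ A *ᵥ x := by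
  rw [dotProduct_mulVec, ← mulVec_transpose, hA.eq, dotProduct_comm]

theorem polarization_dotProduct_mulVec [CommRing R] {A : Matrix ι ι R} (hA : A.IsSymm)
    (x y : ι → R) :
    4 * (y ⬝ᵥ A *ᵥ x) = (x + y) ⬝ᵥ A *ᵥ (x + y) - (x - y) ⬝ᵥ A *ᵥ (x - y) := by
  simp only [mulVec_add, mulVec_sub, add_dotProduct, sub_dotProduct, dotProduct_add,
    dotProduct_sub, dotProduct_mulVec_comm_of_isSymm hA x y]
  ring

theorem parallelogram_dotProduct_mulVec [CommRing R] (C : Matrix ι ι R) (x y : ι → R) :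
    (x + y) ⬝ᵥ C *ᵥ (x + y) + (x - y) ⬝ᵥ C *ᵥ (x - y) =
      2 * (x ⬝ᵥ C *ᵥ x + y ⬝ᵥ C *ᵥ y) := by
  simp only [mulVec_add, mulVec_sub, add_dotProduct, sub_dotProduct, dotProduct_add,
    dotProduct_sub]
  ring

theorem two_mul_dotProduct_mulVec_le_of_abs_le [CommRing R] [LinearOrder R]
    [IsStrictOrderedRing R] {A C : Matrix ι ι R} (hA : A.IsSymm)
    (hAC : ∀ z, |z ⬝ᵥ A *ᵥ z| ≤ z ⬝ᵥ C *ᵥ z) (x y : ι → R) :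
    2 * (y ⬝ᵥ A *ᵥ x) ≤ x ⬝ᵥ C *ᵥ x + y ⬝ᵥ C *ᵥ y := by
  have upper := (abs_le.1 (hAC (x + y))).2
  have lower := (abs_le.1 (hAC (x - y))).1
  linarith [polarization_dotProduct_mulVec hA x y, parallelogram_dotProduct_mulVec C x y]

theorem abs_dotProduct_mulVec_le_add [CommRing R] [LinearOrder R] [IsOrderedRing R] [StarRing R]
    [TrivialStar R] {A B : Matrix ι ι R} (hA : A.PosSemidef) (hB : B.PosSemidef) (z : ι → R) :
    |z ⬝ᵥ A *ᵥ z| ≤ z ⬝ᵥ (A + B) *ᵥ z := by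
  have hAz : 0 ≤ z ⬝ᵥ A *ᵥ z := by simpa using hA.dotProduct_mulVec_nonneg z
  have hBz : 0 ≤ z ⬝ᵥ B *ᵥ z := by simpa using hB.dotProduct_mulVec_nonneg z
  rw [abs_of_nonneg hAz, add_mulVec, dotProduct_add]
  exact le_add_of_nonneg_right hBz

end QuadraticForm

theorem qqstar_norm_monotone_general {ι : Type*} [Fintype ι] (q qs : ℝ≥0∞)
    [q.HolderConjugate qs] {A C : Matrix ι ι ℝ} (hA : A.IsSymm)
    (hAC : ∀ z, |z ⬝ᵥ A *ᵥ z| ≤ z ⬝ᵥ C *ᵥ z) :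
    opNorm q qs A ≤ opNorm q qs C := by
  have : Fact (1 ≤ q) := ⟨ENNReal.HolderConjugate.one_le q qs⟩
  refine opNorm_le_of_dotProduct_mulVec_le q fun x y hx hy => ?_
  linarith [two_mul_dotProduct_mulVec_le_of_abs_le hA hAC x y,
    dotProduct_mulVec_le_opNorm qs C hx hx, dotProduct_mulVec_le_opNorm qs C hy hy]

/-- For `q ∈ [1,∞]` with dual exponent `q*` (`1/q + 1/q* = 1` in `ℝ≥0∞`), the
`q → q*` operator norm is monotone: for all PSD matrices `A, B`,
`‖A + B‖_{q→q*} ≥ ‖A‖_{q→q*}`. -/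
theorem qqstar_norm_monotone {n : ℕ} (q qs : ℝ≥0∞) (hq : 1 ≤ q)
    (hdual : 1 / q + 1 / qs = 1)
    (A B : Matrix (Fin n) (Fin n) ℝ) (hA : A.PosSemidef) (hB : B.PosSemidef) :
    opNorm q qs A ≤ opNorm q qs (A + B) := by
  have : q.HolderConjugate qs := ENNReal.holderConjugate_iff.2 (by simpa using hdual)
  exact qqstar_norm_monotone_general q qs (isHermitian_iff_isSymm.1 hA.isHermitian)
    (abs_dotProduct_mulVec_le_add hA hB)
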